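/- For every integer ℓ ≥ 2 and every positive integer λ, there exists a positive integer s_0 (depending only on ℓ and λ) such that for every integer s ≥ s_0 with λ dividing 2^s−1, the BCH code C_{(2,n,2ℓ,0)} of length n = (2^s−1)/λ has dimension n − 1 − (ℓ−1)s, minimum distance exactly 2ℓ, and is distance-optimal with respect to the sphere packing bound: every binary linear code of length n and dimension n − 1 − (ℓ−1)s has minimum distance at most 2ℓ. -/

import Mathlib

open Finset

/-- The binary cyclic (BCH-type) code of length `n` over GF(2), consisting of all
words `c` such that `∑ i, c i • β ^ (j * i) = 0` for every `j` in the check set `J`. -/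
def BCHCode {F : Type} [Field F] [Algebra (ZMod 2) F] (n : ℕ) (β : F) (J : Finset ℕ) :
    Submodule (ZMod 2) (Fin n → ZMod 2) where
  carrier := {c | ∀ j ∈ J, ∑ i : Fin n, c i • β ^ (j * (i : ℕ)) = 0}
  add_mem' := by
    intro a b ha hb j hj
    simp only [Set.mem_setOf_eq, Pi.add_apply, add_smul, Finset.sum_add_distrib] at *
    rw [ha j hj, hb j hj, add_zero]
  zero_mem' := by
    intro j hj
    simp
  smul_mem' := by
    intro r c hc j hj
    simp only [Set.mem_setOf_eq, Pi.smul_apply, smul_assoc, ← Finset.smul_sum] at *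
    rw [hc j hj, smul_zero]

/-- The (Euclidean) dual of a binary linear code. -/
def dualCode {N : ℕ} (C : Submodule (ZMod 2) (Fin N → ZMod 2)) :
    Submodule (ZMod 2) (Fin N → ZMod 2) where
  carrier := {b | ∀ c ∈ C, ∑ i, b i * c i = 0}
  add_mem' := by
    intro a b ha hb c hc
    simp only [Set.mem_setOf_eq, Pi.add_apply, add_mul, Finset.sum_add_distrib] at *
    rw [ha c hc, hb c hc, add_zero]
  zero_mem' := by
    intro c hc
    simp
  smul_mem' := by
    intro r b hb c hc
    simp only [Set.mem_setOf_eq, Pi.smul_apply, smul_eq_mul, mul_assoc, ← Finset.mul_sum] at *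
    rw [hb c hc, mul_zero]

/-- The linear map appending an overall parity-check coordinate. -/
def extendMap (N : ℕ) : (Fin N → ZMod 2) →ₗ[ZMod 2] (Fin (N + 1) → ZMod 2) where
  toFun c := fun j => if h : (j : ℕ) < N then c ⟨j, h⟩ else ∑ i, c i
  map_add' a b := by
    funext j
    by_cases h : (j : ℕ) < N <;> simp [h, Finset.sum_add_distrib]
  map_smul' r c := by
    funext j
    by_cases h : (j : ℕ) < N <;> simp [h, Finset.mul_sum]

/-- The extended code of a binary linear code. -/
def extendedCode {N : ℕ} (C : Submodule (ZMod 2) (Fin N → ZMod 2)) :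
    Submodule (ZMod 2) (Fin (N + 1) → ZMod 2) :=
  C.map (extendMap N)

/-- The minimum distance (= minimum nonzero Hamming weight) of a binary linear code. -/
noncomputable def minDist {N : ℕ} (C : Submodule (ZMod 2) (Fin N → ZMod 2)) : ℕ :=
  sInf {w | ∃ c ∈ C, c ≠ 0 ∧ hammingNorm c = w}

/-- The number of codewords of Hamming weight `w` in a binary linear code. -/
noncomputable def weightCount {N : ℕ} (C : Submodule (ZMod 2) (Fin N → ZMod 2)) (w : ℕ) : ℕ :=
  Set.ncard {c : Fin N → ZMod 2 | c ∈ C ∧ hammingNorm c = w}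

/-- The 2-cyclotomic coset of `i` modulo `n`. -/
def cycCoset (n i : ℕ) : Set ℕ := {x | ∃ j : ℕ, x = i * 2 ^ j % n}

/-- The coset leader (smallest element) of the 2-cyclotomic coset of `i` modulo `n`. -/
noncomputable def cosetLeader (n i : ℕ) : ℕ := sInf (cycCoset n i)

/-!
Put `β = α ^ λ`, of order `n`, and `m = ℓ - 1`.  Squaring shows that the zeros `1, β, …, β ^ (2m)`
impose the same condition as the zeros `1, β, β ^ 3, …, β ^ (2m - 1)`, so the code is the kernel of
a map into `GF(2) × GF(2 ^ s) ^ m`.  A functional vanishing on the range of this map is, through the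
trace form, a linear relation between the geometric sequences of ratios `1` and
`β ^ ((2k + 1) * 2 ^ j)`.  For large `s` these conjugates are pairwise distinct, because two odd
numbers much smaller than `2 ^ (s / 2)` never lie in the same 2-cyclotomic coset modulo `n`; hence a
Vandermonde argument kills the functional and the redundancy is exactly `1 + m * s`.

The lower bound `2ℓ` on the weights is the BCH bound for `2ℓ - 1` consecutive zeros.  For the upper
bound, a code with this redundancy correcting `ℓ` errors would satisfy the Hamming bound
`n.choose ℓ ≤ 2 ^ (1 + m * s)`, whereas `n.choose ℓ` grows like `2 ^ (ℓ * s)`.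
-/

section HammingBound

variable {ι G : Type*} [Fintype ι] [DecidableEq ι] [Fintype G] [DecidableEq G]

theorem choose_le_card_hammingNorm_le [Zero G] [Nontrivial G] (t : ℕ) :
    (Fintype.card ι).choose t ≤ #{x : ι → G | hammingNorm x ≤ t} := by
  obtain ⟨g, hg⟩ := exists_ne (0 : G)
  let word (S : Finset ι) : ι → G := S.piecewise (fun _ => g) 0
  have support_word (S : Finset ι) : ({i | word S i ≠ 0} : Finset ι) = S := by
    ext i
    by_cases hi : i ∈ S <;> simp [word, hi, hg]
  rw [← card_univ, ← card_powersetCard]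
  refine card_le_card_of_injOn word (fun S hS => ?_) fun S _ T _ h => ?_
  · simp [hammingNorm, support_word, (mem_powersetCard.mp hS).2]
  · rw [← support_word S, h, support_word T]

theorem card_mul_card_hammingNorm_le_le_card_pow [AddGroup G] {C : AddSubgroup (ι → G)} {t : ℕ}
    (hC : ∀ c ∈ C, hammingNorm c ≤ 2 * t → c = 0) :
    Nat.card C * #{x : ι → G | hammingNorm x ≤ t} ≤ Fintype.card G ^ Fintype.card ι := by
  let shift (p : C × {x : ι → G // hammingNorm x ≤ t}) : ι → G := p.2.1 + p.1.1
  have shift_injective : Function.Injective shift := by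
    rintro ⟨c, x, hx⟩ ⟨d, y, hy⟩ (h : x + c.1 = y + d.1)
    have hdiff : (d - c : C).1 = -y + x := by
      rw [AddSubgroup.coe_sub, eq_neg_add_iff_add_eq, ← add_sub_assoc, ← h, add_sub_cancel_right]
    have hnorm : hammingNorm (d - c : C).1 ≤ 2 * t :=
      calc hammingNorm (d - c : C).1 = hammingDist y x := by
            rw [hdiff, hammingDist_eq_hammingNorm]
        _ ≤ hammingDist y 0 + hammingDist 0 x := hammingDist_triangle y 0 x
        _ ≤ 2 * t := by rw [hammingDist_zero_right, hammingDist_zero_left]; omega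
    obtain rfl : d = c := sub_eq_zero.mp (Subtype.ext (hC _ (d - c).2 hnorm))
    simpa using h
  simpa [Fintype.card_subtype] using Nat.card_le_card_of_injective shift shift_injective

end HammingBound

section MinDist

variable {N : ℕ} {C : Submodule (ZMod 2) (Fin N → ZMod 2)}

theorem minDist_le_hammingNorm {c : Fin N → ZMod 2} (hc : c ∈ C) (hc0 : c ≠ 0) :
    minDist C ≤ hammingNorm c :=
  Nat.sInf_le ⟨c, hc, hc0, rfl⟩

theorem le_minDist {d : ℕ} (hC : C ≠ ⊥) (h : ∀ c ∈ C, c ≠ 0 → d ≤ hammingNorm c) :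
    d ≤ minDist C := by
  obtain ⟨c, hc, hc0⟩ := C.exists_mem_ne_zero_of_ne_bot hC
  refine le_csInf ⟨_, c, hc, hc0, rfl⟩ ?_
  rintro _ ⟨c, hc, hc0, rfl⟩
  exact h c hc hc0

theorem two_pow_finrank_mul_choose_le {t : ℕ} (ht : 2 * t < minDist C) :
    2 ^ Module.finrank (ZMod 2) C * N.choose t ≤ 2 ^ N := by
  have hC : ∀ c ∈ C.toAddSubgroup, hammingNorm c ≤ 2 * t → c = 0 := fun c hc hct => by
    by_contra hc0
    exact (ht.trans_le (minDist_le_hammingNorm hc hc0)).not_ge hct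
  have hcard : Nat.card C = 2 ^ Module.finrank (ZMod 2) C := by
    rw [Module.natCard_eq_pow_finrank (K := ZMod 2), Nat.card_zmod]
  calc 2 ^ Module.finrank (ZMod 2) C * N.choose t
      ≤ Nat.card C * #{x : Fin N → ZMod 2 | hammingNorm x ≤ t} := by
        rw [hcard]
        gcongr
        simpa using choose_le_card_hammingNorm_le (ι := Fin N) (G := ZMod 2) t
    _ ≤ 2 ^ N := by simpa using card_mul_card_hammingNorm_le_le_card_pow hC

theorem minDist_le_two_mul_of_two_pow_lt_choose {r t : ℕ}
    (hr : N ≤ Module.finrank (ZMod 2) C + r) (ht : 2 ^ r < N.choose t) :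
    minDist C ≤ 2 * t := by
  by_contra! hlt
  have : 2 ^ N < 2 ^ N :=
    calc 2 ^ N ≤ 2 ^ (Module.finrank (ZMod 2) C + r) := Nat.pow_le_pow_right two_pos hr
      _ = 2 ^ Module.finrank (ZMod 2) C * 2 ^ r := pow_add ..
      _ < 2 ^ Module.finrank (ZMod 2) C * N.choose t := by gcongr
      _ ≤ 2 ^ N := two_pow_finrank_mul_choose_le hlt
  exact this.false

end MinDist

theorem eq_zero_of_forall_lt_hammingNorm_sum_mul_pow_eq_zero {ι R : Type*} [Fintype ι]
    [CommRing R] [IsDomain R] [DecidableEq R] {x v : ι → R} (hx : Function.Injective x)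
    (h : ∀ j < hammingNorm v, ∑ i, v i * x i ^ j = 0) : v = 0 := by
  let S : Finset ι := {i | v i ≠ 0}
  have e : Fin #S ≃ S := S.equivFin.symm
  have hsupport : (fun k => v (e k)) = 0 := by
    refine Matrix.eq_zero_of_forall_pow_sum_mul_pow_eq_zero (f := fun k => x (e k))
      (hx.comp (Subtype.val_injective.comp e.injective)) fun j => ?_
    rw [e.sum_comp fun i : S => v i * x i ^ (j : ℕ), sum_coe_sort S fun i => v i * x i ^ (j : ℕ),
      ← h j j.2]
    exact sum_subset (subset_univ S) fun i _ hi => by simp_all [S]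
  ext i
  by_contra hi
  have hiS : i ∈ S := by simpa [S] using hi
  exact hi (by simpa using congrFun hsupport (e.symm ⟨i, hiS⟩))

theorem lt_hammingNorm_of_mem_BCHCode {F : Type} [Field F] [Algebra (ZMod 2) F] {n N : ℕ} {β : F}
    (hβ : orderOf β = n) {c : Fin n → ZMod 2} (hc : c ∈ BCHCode n β (range N)) (hc0 : c ≠ 0) :
    N < hammingNorm c := by
  classical
  have hnodes : Function.Injective fun i : Fin n => β ^ (i : ℕ) := fun i j h =>
    Fin.ext (pow_injOn_Iio_orderOf (by simp [hβ]) (by simp [hβ]) h)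
  have hweight : hammingNorm (fun i => algebraMap (ZMod 2) F (c i)) = hammingNorm c :=
    hammingNorm_comp (fun _ => algebraMap (ZMod 2) F)
      (fun _ => (algebraMap (ZMod 2) F).injective) fun _ => map_zero _
  contrapose! hc0
  have hzero : (fun i => algebraMap (ZMod 2) F (c i)) = 0 := by
    refine eq_zero_of_forall_lt_hammingNorm_sum_mul_pow_eq_zero hnodes fun j hj => ?_
    rw [← hc j (mem_range.mpr (by omega))]
    refine sum_congr rfl fun i _ => ?_
    rw [Algebra.smul_def, ← pow_mul, mul_comm j]
  ext i
  simpa using congrFun hzero i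

theorem eq_and_eq_of_mul_pow_modEq_mul_pow {q n s B a b i j : ℕ} (hq : 0 < q)
    (hn : q ^ s ≡ 1 [MOD n]) (hB : B * q ^ (s / 2) < n) (ha : ¬ q ∣ a) (hb : ¬ q ∣ b)
    (haB : a ≤ B) (hbB : b ≤ B) (hi : i < s) (hj : j < s)
    (h : a * q ^ i ≡ b * q ^ j [MOD n]) : a = b ∧ i = j := by
  wlog hij : i ≤ j generalizing a b i j
  · exact (this hb ha hbB haB hj hi h.symm (by omega)).imp Eq.symm Eq.symm
  have hlt {c e : ℕ} (hc : c ≤ B) (he : e ≤ s / 2) : c * q ^ e < n :=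
    (Nat.mul_le_mul hc (Nat.pow_le_pow_right hq he)).trans_lt hB
  -- The exponents `j - i` and `s - (j - i)` relate `a` to `b` and `b` to `a` modulo `n`; the one
  -- that is at most `s / 2` makes both sides smaller than `n`.
  have hexp {c e : ℕ} (hc : ¬ q ∣ c * q ^ e) : e = 0 := by
    by_contra he
    exact hc (dvd_mul_of_dvd_right (dvd_pow_self q he) c)
  have hleft : a ≡ b * q ^ (j - i) [MOD n] :=
    calc a ≡ a * q ^ s [MOD n] := by simpa using (hn.mul_left a).symm
      _ = a * q ^ i * q ^ (s - i) := by rw [mul_assoc, ← pow_add, Nat.add_sub_cancel' hi.le]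
      _ ≡ b * q ^ j * q ^ (s - i) [MOD n] := h.mul_right _
      _ = b * q ^ (j - i) * q ^ s := by
        rw [mul_assoc, mul_assoc, ← pow_add, ← pow_add]
        congr 2
        omega
      _ ≡ b * q ^ (j - i) [MOD n] := by simpa using hn.mul_left (b * q ^ (j - i))
  rcases le_or_gt (j - i) (s / 2) with hd | hd
  · have heq : a = b * q ^ (j - i) :=
      hleft.eq_of_lt_of_lt (by simpa using hlt haB (Nat.zero_le _)) (hlt hbB hd)
    have hd0 : j - i = 0 := hexp (heq ▸ ha)
    exact ⟨by simpa [hd0] using heq, by omega⟩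
  · have hright : a * q ^ (s - (j - i)) ≡ b [MOD n] :=
      calc a * q ^ (s - (j - i)) ≡ b * q ^ (j - i) * q ^ (s - (j - i)) [MOD n] := hleft.mul_right _
        _ = b * q ^ s := by rw [mul_assoc, ← pow_add, Nat.add_sub_cancel' (by omega)]
        _ ≡ b [MOD n] := by simpa using hn.mul_left b
    have heq : a * q ^ (s - (j - i)) = b :=
      hright.eq_of_lt_of_lt (hlt haB (by omega)) (by simpa using hlt hbB (Nat.zero_le _))
    have hd0 : s - (j - i) = 0 := hexp (heq.symm ▸ hb)
    omega

theorem exists_forall_eq_sum_trace_mul {K L κ : Type*} [Field K] [Field L] [Algebra K L]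
    [FiniteDimensional K L] [Algebra.IsSeparable K L] [Fintype κ] (f : Module.Dual K (κ → L)) :
    ∃ a : κ → L, ∀ x, f x = ∑ k, Algebra.trace K L (a k * x k) := by
  classical
  have hcoord (k : κ) : ∃ a : L, ∀ y, f (Pi.single k y) = Algebra.trace K L (a * y) := by
    obtain ⟨a, ha⟩ := ((Algebra.traceForm K L).toDual (traceForm_nondegenerate K L)).surjective
      (f ∘ₗ LinearMap.single K (fun _ => L) k)
    exact ⟨a, fun y => (LinearMap.congr_fun ha y).symm⟩
  choose a ha using hcoord
  refine ⟨a, fun x => ?_⟩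
  conv_lhs => rw [← univ_sum_single x, map_sum]
  exact sum_congr rfl fun k _ => ha k (x k)

section Trace

variable {K L κ : Type*} [Field K] [Field L] [Finite L] [Algebra K L]

theorem injective_pow_pow_card_pow {β : L} {e : κ → ℕ} {B : ℕ} (he : Function.Injective e)
    (hcard : ∀ k, ¬ Nat.card K ∣ e k) (heB : ∀ k, e k ≤ B)
    (hB : B * Nat.card K ^ (Module.finrank K L / 2) < orderOf β) :
    Function.Injective fun p : κ × Fin (Module.finrank K L) =>
      (β ^ e p.1) ^ Nat.card K ^ (p.2 : ℕ) := by
  have : Finite K := Finite.of_injective _ (algebraMap K L).injective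
  have := Fintype.ofFinite L
  have hfin : IsOfFinOrder β := orderOf_pos_iff.mp (by omega)
  have hfrob : Nat.card K ^ Module.finrank K L ≡ 1 [MOD orderOf β] := by
    rw [← hfin.pow_eq_pow_iff_modEq, ← Module.natCard_eq_pow_finrank, Nat.card_eq_fintype_card,
      FiniteField.pow_card, pow_one]
  rintro ⟨k, i⟩ ⟨k', j⟩ h
  simp only [← pow_mul, hfin.pow_eq_pow_iff_modEq] at h
  obtain ⟨hk, hij⟩ := eq_and_eq_of_mul_pow_modEq_mul_pow Nat.card_pos hfrob hB (hcard k)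
    (hcard k') (heB k) (heB k') i.2 j.2 h
  exact Prod.ext (he hk) (Fin.ext hij)

theorem eq_zero_of_forall_sum_trace_mul_pow_eq_zero [Fintype κ] {γ a : κ → L}
    (hγ : Function.Injective fun p : κ × Fin (Module.finrank K L) =>
      γ p.1 ^ Nat.card K ^ (p.2 : ℕ))
    (h : ∀ i : ℕ, ∑ k, Algebra.trace K L (a k * γ k ^ i) = 0) : a = 0 := by
  classical
  have hconj (i : ℕ) : ∑ p : κ × Fin (Module.finrank K L),
      a p.1 ^ Nat.card K ^ (p.2 : ℕ) * (γ p.1 ^ Nat.card K ^ (p.2 : ℕ)) ^ i = 0 := by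
    rw [← map_zero (algebraMap K L), ← h i, map_sum, Fintype.sum_prod_type]
    refine sum_congr rfl fun k _ => ?_
    rw [FiniteField.algebraMap_trace_eq_sum_pow, sum_range]
    refine sum_congr rfl fun j _ => ?_
    rw [mul_pow, pow_right_comm]
  have hzero := eq_zero_of_forall_lt_hammingNorm_sum_mul_pow_eq_zero hγ fun i _ => hconj i
  ext k
  simpa using congrFun hzero (k, ⟨0, Module.finrank_pos⟩)

theorem span_range_one_pow_eq_top [Finite κ] {γ : κ → L} (hγ1 : ∀ k, γ k ≠ 1)
    (hγ : Function.Injective fun p : κ × Fin (Module.finrank K L) =>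
      γ p.1 ^ Nat.card K ^ (p.2 : ℕ)) :
    Submodule.span K (Set.range fun i : ℕ => ((1, fun k => γ k ^ i) : K × (κ → L))) = ⊤ := by
  have := Fintype.ofFinite κ
  have : Finite K := Finite.of_injective _ (algebraMap K L).injective
  by_contra hne
  obtain ⟨f, hf0, hf⟩ := Submodule.exists_le_ker_of_lt_top _ (lt_top_iff_ne_top.mpr hne)
  have hf (i : ℕ) : f (1, fun k => γ k ^ i) = 0 := hf (Submodule.subset_span ⟨i, rfl⟩)
  obtain ⟨a, ha⟩ := exists_forall_eq_sum_trace_mul (f ∘ₗ LinearMap.inr K K (κ → L))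
  -- Subtracting the relations for consecutive exponents removes the constant term `f (1, 0)`.
  have hdiff (i : ℕ) : ∑ k, Algebra.trace K L (a k * (γ k - 1) * γ k ^ i) = 0 :=
    calc ∑ k, Algebra.trace K L (a k * (γ k - 1) * γ k ^ i)
        = ∑ k, Algebra.trace K L (a k * (γ k ^ (i + 1) - γ k ^ i)) := by
          refine sum_congr rfl fun k _ => ?_
          ring_nf
      _ = f ((1, fun k => γ k ^ (i + 1)) - (1, fun k => γ k ^ i)) := by
          rw [Prod.mk_sub_mk, sub_self]
          exact (ha _).symm
      _ = 0 := by rw [map_sub, hf, hf, sub_zero]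
  have ha0 (k : κ) : a k = 0 := by
    have := congrFun (eq_zero_of_forall_sum_trace_mul_pow_eq_zero hγ hdiff) k
    exact (mul_eq_zero.mp this).resolve_right (sub_ne_zero.mpr (hγ1 k))
  have hinr (x : κ → L) : f (0, x) = 0 := by simpa [ha0] using ha x
  have hinl : f (1, 0) = 0 := by
    have hsub : f (1, 0) = f (1, fun k => γ k ^ 0) - f (0, fun k => γ k ^ 0) := by
      rw [← map_sub]
      simp
    rw [hsub, hf, hinr, sub_zero]
  refine hf0 (LinearMap.prod_ext (LinearMap.ext_ring ?_) (LinearMap.ext fun x => ?_))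
  · simpa using hinl
  · simpa using hinr x

end Trace

theorem sum_smul_pow_card {ι K R : Type*} [Field K] [Fintype K] [CommRing R] [Algebra K R]
    (s : Finset ι) (c : ι → K) (x : ι → R) :
    ∑ i ∈ s, c i • x i ^ Fintype.card K = (∑ i ∈ s, c i • x i) ^ Fintype.card K := by
  rw [← FiniteField.frobeniusAlgHom_apply K, map_sum]
  exact sum_congr rfl fun i _ => (map_smul (FiniteField.frobeniusAlgHom K R) (c i) (x i)).symm

section Syndrome

variable {F : Type} [Field F] [Algebra (ZMod 2) F]

/-- The reduced syndrome of a binary word `c` with respect to the zeros `1, β, …, β ^ (2m)`: the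
parity of `c` together with the values at `β, β ^ 3, …, β ^ (2m - 1)` of the polynomial with
coefficients `c`.  The even powers of `β` are omitted since their values are squares of these. -/
noncomputable def syndrome (n m : ℕ) (β : F) :
    (Fin n → ZMod 2) →ₗ[ZMod 2] ZMod 2 × (Fin m → F) :=
  Fintype.linearCombination (ZMod 2)
    fun i : Fin n => (1, fun k : Fin m => (β ^ (2 * (k : ℕ) + 1)) ^ (i : ℕ))

theorem syndrome_apply {n m : ℕ} (β : F) (c : Fin n → ZMod 2) :
    syndrome n m β c =
      (∑ i, c i, fun k : Fin m => ∑ i, c i • β ^ ((2 * (k : ℕ) + 1) * (i : ℕ))) := by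
  simp only [syndrome, Fintype.linearCombination_apply]
  ext <;> simp [Prod.fst_sum, Prod.snd_sum, pow_mul]

theorem BCHCode_range_eq_ker_syndrome (n m : ℕ) (β : F) :
    BCHCode n β (range (2 * m + 1)) = LinearMap.ker (syndrome n m β) := by
  ext c
  have hzero : ∑ i, c i • β ^ (0 * (i : ℕ)) = algebraMap (ZMod 2) F (∑ i, c i) := by
    simp [Algebra.smul_def]
  rw [LinearMap.mem_ker, syndrome_apply, Prod.mk_eq_zero, funext_iff]
  refine ⟨fun hc => ⟨?_, fun k => hc _ (mem_range.mpr (by omega))⟩, fun ⟨hsum, hodd⟩ j hj => ?_⟩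
  · rw [← map_eq_zero (algebraMap (ZMod 2) F), ← hzero]
    exact hc 0 (by simp)
  · rw [mem_range] at hj
    induction j using Nat.strong_induction_on with
    | _ j ih =>
      rcases Nat.even_or_odd' j with ⟨k, rfl | rfl⟩
      · rcases k.eq_zero_or_pos with rfl | hk
        · rw [mul_zero, hzero, hsum, map_zero]
        · have hsquare : ∑ i, c i • β ^ (2 * k * (i : ℕ)) = (∑ i, c i • β ^ (k * (i : ℕ))) ^ 2 := by
            simpa only [ZMod.card, ← pow_mul, mul_comm _ 2, mul_assoc] using
              (sum_smul_pow_card univ c fun i => β ^ (k * (i : ℕ)))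
          rw [hsquare, ih k (by omega) (by omega), zero_pow two_ne_zero]
      · exact hodd ⟨k, by omega⟩

variable [Finite F] {m : ℕ} {β : F}

theorem syndrome_surjective
    (hm : 2 * m * 2 ^ (Module.finrank (ZMod 2) F / 2) < orderOf β) :
    Function.Surjective (syndrome (orderOf β) m β) := by
  have hlt : 2 * m < orderOf β := (Nat.le_mul_of_pos_right _ (by positivity)).trans_lt hm
  have hne_one (k : Fin m) : β ^ (2 * (k : ℕ) + 1) ≠ 1 :=
    pow_ne_one_of_lt_orderOf (by omega) (by omega)
  have hconj := injective_pow_pow_card_pow (K := ZMod 2) (β := β) (B := 2 * m)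
    (e := fun k : Fin m => 2 * (k : ℕ) + 1) (fun k k' h => Fin.ext (by simpa using h))
    (by simp) (fun k => by omega) (by rwa [Nat.card_zmod])
  rw [← LinearMap.range_eq_top, syndrome, Fintype.range_linearCombination, eq_top_iff,
    ← span_range_one_pow_eq_top hne_one hconj]
  refine Submodule.span_mono ?_
  rintro _ ⟨i, rfl⟩
  refine ⟨⟨i % orderOf β, Nat.mod_lt _ (by omega)⟩, Prod.ext rfl (funext fun k => ?_)⟩
  simp only [← pow_mul, mul_comm _ i]
  simp only [mul_comm _ (i % _), pow_mul, pow_mod_orderOf]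

theorem finrank_BCHCode_add
    (hm : 2 * m * 2 ^ (Module.finrank (ZMod 2) F / 2) < orderOf β) :
    Module.finrank (ZMod 2) (BCHCode (orderOf β) β (range (2 * m + 1))) +
      (1 + m * Module.finrank (ZMod 2) F) = orderOf β := by
  have hrank := (syndrome (orderOf β) m β).finrank_range_add_finrank_ker
  rw [LinearMap.range_eq_top.mpr (syndrome_surjective hm), finrank_top, Module.finrank_prod,
    Module.finrank_self, Module.finrank_pi_fintype, sum_const, card_univ, Fintype.card_fin,
    smul_eq_mul, Module.finrank_fin_fun] at hrank
  rw [BCHCode_range_eq_ker_syndrome, add_comm, hrank]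

end Syndrome

section Asymptotics

variable {lam n s : ℕ}

open Nat

theorem mul_two_pow_half_lt {B : ℕ} (hn : lam * n = 2 ^ s - 1) (hlam : 0 < lam)
    (hs : lam * (B + 1) < 2 ^ (s / 2)) : B * 2 ^ (s / 2) < n := by
  have hhalf : 2 ^ (s / 2) * 2 ^ (s / 2) ≤ 2 ^ s := by
    rw [← pow_add]
    exact Nat.pow_le_pow_right two_pos (by omega)
  have hpos : 0 < lam * (B + 1) := by positivity
  have hlt : lam * (B * 2 ^ (s / 2)) + 1 < 2 ^ s :=
    calc lam * (B * 2 ^ (s / 2)) + 1 < lam * (B * 2 ^ (s / 2)) + 2 ^ (s / 2) := by omega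
      _ ≤ lam * (B * 2 ^ (s / 2)) + lam * 2 ^ (s / 2) := by
        gcongr
        exact Nat.le_mul_of_pos_left _ hlam
      _ = lam * (B + 1) * 2 ^ (s / 2) := by ring
      _ ≤ 2 ^ (s / 2) * 2 ^ (s / 2) := by gcongr
      _ ≤ 2 ^ s := hhalf
  refine lt_of_mul_lt_mul_left (a := lam) ?_ (Nat.zero_le _)
  omega

theorem two_pow_lt_choose {m : ℕ} (hn : lam * n = 2 ^ s - 1) (hlam : 0 < lam) (hm : 2 * m < n)
    (hs : 2 * (4 * lam) ^ (m + 1) * (m + 1)! < 2 ^ s) :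
    2 ^ (1 + m * s) < n.choose (m + 1) := by
  have hbase : 2 ^ s ≤ 4 * lam * (n - m) := by
    have h1 : lam * 1 ≤ lam * n := by gcongr; omega
    have h2 : lam * n ≤ lam * (2 * (n - m)) := by gcongr; omega
    have h3 : 4 * lam * (n - m) = 2 * (lam * (2 * (n - m))) := by ring
    omega
  have hdesc : (n - m) ^ (m + 1) ≤ (m + 1)! * n.choose (m + 1) := by
    rw [← descFactorial_eq_factorial_mul_choose, ← Nat.add_sub_add_right n 1 m]
    exact pow_sub_le_descFactorial n (m + 1)
  have hpow : 2 ^ (m * s) * 2 ^ s ≤ (4 * lam) ^ (m + 1) * ((m + 1)! * n.choose (m + 1)) := calc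
    2 ^ (m * s) * 2 ^ s = (2 ^ s) ^ (m + 1) := by ring
    _ ≤ (4 * lam * (n - m)) ^ (m + 1) := by gcongr
    _ = (4 * lam) ^ (m + 1) * (n - m) ^ (m + 1) := mul_pow ..
    _ ≤ (4 * lam) ^ (m + 1) * ((m + 1)! * n.choose (m + 1)) := by gcongr
  by_contra! hle
  have : 2 ^ (m * s) * 2 ^ s < 2 ^ (m * s) * 2 ^ s := calc
    2 ^ (m * s) * 2 ^ s ≤ (4 * lam) ^ (m + 1) * ((m + 1)! * n.choose (m + 1)) := hpow
    _ ≤ (4 * lam) ^ (m + 1) * ((m + 1)! * 2 ^ (1 + m * s)) := by gcongr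
    _ = 2 ^ (m * s) * (2 * (4 * lam) ^ (m + 1) * (m + 1)!) := by ring
    _ < 2 ^ (m * s) * 2 ^ s := by gcongr
  exact this.false

theorem exists_forall_le_mul_two_pow_half_lt_and_two_pow_lt_choose (m : ℕ) {lam : ℕ}
    (hlam : 0 < lam) :
    ∃ s₀, 0 < s₀ ∧ ∀ s n : ℕ, s₀ ≤ s → lam * n = 2 ^ s - 1 →
      2 * m * 2 ^ (s / 2) < n ∧ 2 ^ (1 + m * s) < n.choose (m + 1) := by
  let C := 2 * (4 * lam) ^ (m + 1) * (m + 1)!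
  refine ⟨2 * C, by positivity, fun s n hs hn => ?_⟩
  have hC : C < 2 ^ (s / 2) := (by omega : C ≤ s / 2).trans_lt Nat.lt_two_pow_self
  have hlamC : lam * (2 * m + 1) ≤ C :=
    calc lam * (2 * m + 1) ≤ 2 * (4 * lam) * (m + 1) := by nlinarith
      _ ≤ 2 * (4 * lam) ^ (m + 1) * (m + 1)! := by
        gcongr
        · exact Nat.le_self_pow m.succ_ne_zero _
        · exact self_le_factorial _
  have hhalf : 2 * m * 2 ^ (s / 2) < n := mul_two_pow_half_lt hn hlam (hlamC.trans_lt hC)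
  refine ⟨hhalf, two_pow_lt_choose hn hlam ?_ ?_⟩
  · exact (Nat.le_mul_of_pos_right _ (by positivity)).trans_lt hhalf
  · exact hC.trans_le (Nat.pow_le_pow_right two_pos (Nat.div_le_self s 2))

end Asymptotics

theorem stmt_19_general (ℓ lam : ℕ) (hℓ : 0 < ℓ) (hlam : 0 < lam) :
    ∃ s₀ : ℕ, 0 < s₀ ∧
      ∀ (F : Type) [Field F] [Algebra (ZMod 2) F] (s n : ℕ) (β : F),
        s₀ ≤ s → Module.finrank (ZMod 2) F = s → lam * n = 2 ^ s - 1 → orderOf β = n →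
          Module.finrank (ZMod 2) (BCHCode n β (range (2 * ℓ - 1))) = n - 1 - (ℓ - 1) * s ∧
          minDist (BCHCode n β (range (2 * ℓ - 1))) = 2 * ℓ ∧
          ∀ D : Submodule (ZMod 2) (Fin n → ZMod 2),
            n - 1 - (ℓ - 1) * s ≤ Module.finrank (ZMod 2) D → minDist D ≤ 2 * ℓ := by
  obtain ⟨m, rfl⟩ := Nat.exists_eq_add_of_le' hℓ
  obtain ⟨s₀, hs₀, hlarge⟩ :=
    exists_forall_le_mul_two_pow_half_lt_and_two_pow_lt_choose m hlam
  refine ⟨s₀, hs₀, ?_⟩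
  rintro F _ _ s n β hs rfl hn rfl
  obtain ⟨hhalf, hchoose⟩ := hlarge _ _ hs hn
  have : Module.Finite (ZMod 2) F := Module.finite_of_finrank_pos (by omega)
  have : Finite F := Module.finite_of_finite (ZMod 2)
  rw [show 2 * (m + 1) - 1 = 2 * m + 1 by omega, Nat.add_sub_cancel]
  set C := BCHCode (orderOf β) β (range (2 * m + 1))
  have hdim : Module.finrank (ZMod 2) C + (1 + m * Module.finrank (ZMod 2) F) = orderOf β :=
    finrank_BCHCode_add hhalf
  have hlength : 1 + m * Module.finrank (ZMod 2) F < orderOf β :=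
    (Nat.pow_lt_pow_iff_right one_lt_two).mp (hchoose.trans_le (Nat.choose_le_two_pow _ _))
  have hoptimal (D : Submodule (ZMod 2) (Fin (orderOf β) → ZMod 2))
      (hD : orderOf β - 1 - m * Module.finrank (ZMod 2) F ≤ Module.finrank (ZMod 2) D) :
      minDist D ≤ 2 * (m + 1) :=
    minDist_le_two_mul_of_two_pow_lt_choose (by omega) hchoose
  have hne : C ≠ ⊥ := Submodule.one_le_finrank_iff.mp (by omega)
  refine ⟨by omega, le_antisymm (hoptimal _ (by omega)) (le_minDist hne fun c hc hc0 => ?_),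
    hoptimal⟩
  exact lt_hammingNorm_of_mem_BCHCode rfl hc hc0

theorem stmt_19 (ℓ lam : ℕ) (hℓ : 2 ≤ ℓ) (hlam : 0 < lam) :
    ∃ s₀ : ℕ, 0 < s₀ ∧
      ∀ s : ℕ, s₀ ≤ s → lam ∣ 2 ^ s - 1 →
        ∀ α : GaloisField 2 s, orderOf α = 2 ^ s - 1 →
          Module.finrank (ZMod 2)
              (BCHCode ((2 ^ s - 1) / lam) (α ^ lam) (Finset.range (2 * ℓ - 1))) =
            (2 ^ s - 1) / lam - 1 - (ℓ - 1) * s ∧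
          minDist (BCHCode ((2 ^ s - 1) / lam) (α ^ lam) (Finset.range (2 * ℓ - 1))) =
            2 * ℓ ∧
          ∀ D : Submodule (ZMod 2) (Fin ((2 ^ s - 1) / lam) → ZMod 2),
            Module.finrank (ZMod 2) D = (2 ^ s - 1) / lam - 1 - (ℓ - 1) * s →
              minDist D ≤ 2 * ℓ := by
  obtain ⟨s₀, hs₀, h⟩ := stmt_19_general ℓ lam (by omega) hlam
  refine ⟨s₀, hs₀, fun s hs hdvd α hα => ?_⟩
  have hβ : orderOf (α ^ lam) = (2 ^ s - 1) / lam := by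
    rw [orderOf_pow_of_dvd hlam.ne' (hα ▸ hdvd), hα]
  exact (h _ s _ _ hs (GaloisField.finrank 2 (by omega)) (Nat.mul_div_cancel' hdvd) hβ).imp_right
    (And.imp_right fun hopt D hD => hopt D hD.ge)
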